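/- Let N ≥ 3, let K ⊂ ℝ^N be a nonempty finite set of points, let p > 0, let γ ∈ (0,1), and let φ : (0,∞) → (0,∞) be locally γ-Hölder continuous and such that φ is monotone (either nonincreasing or nondecreasing) on [r₁,∞) for some r₁ > 0. Then the inequality −Δu ≥ φ(dist(x,K)) u^{−p} has a C² positive solution on ℝ^N \ K if and only if ∫₁^∞ r·φ(r) dr < ∞ and ∫₀¹ r^{(1+p)(N−2)+1} φ(r) dr < ∞. -/

import Mathlib

open Metric Set MeasureTheory Filter

noncomputable def laplacian {N : ℕ} (u : EuclideanSpace ℝ (Fin N) → ℝ)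
    (x : EuclideanSpace ℝ (Fin N)) : ℝ :=
  ∑ i, iteratedFDeriv ℝ 2 u x ![EuclideanSpace.single i 1, EuclideanSpace.single i 1]

/-
Away from the origin of `ℝⁿ⁺²`, the radial solutions of `-Δ w = Φ(|x|)` are `α + β / rⁿ - k(r)`,
where `k ≥ 0` is the radial potential of `Φ`. Comparison with these shows that the minimum over the
sphere of radius `r` of a positive supersolution is `O(r⁻ⁿ)` near an isolated singularity and `O(1)`
near infinity, and that `k` obeys the same bounds. First with `Φ = 0`, this bounds `u` at its
spherical minima and hence `u ^ (-p)` from below; then, with `Φ` the resulting density, it bounds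
`k`, which is the finiteness of the two integrals. A nondecreasing `φ` is handled by comparing with
its constant value at one point, which the integral at infinity forces to vanish. Conversely, when
the integrals are finite, some radial `w ≥ 1 + r⁻ⁿ` satisfies `-Δ w = φ (1 + r⁻ⁿ) ^ (-p)`, and the
sum of its translates to the points of `K` is a solution: the summand centred at the point of `K`
nearest to `x` already provides the required value of `-Δ` there.
-/

section

open InnerProductSpace
open scoped Topology Laplacian

section SecondDerivativeTest

lemma deriv_deriv_nonneg_of_isLocalMin {f : ℝ → ℝ} {t : ℝ} (hmin : IsLocalMin f t)
    (hf : ContinuousAt f t) : 0 ≤ deriv (deriv f) t := by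
  by_contra! hneg
  have hmax : IsLocalMax f t := isLocalMax_of_deriv_deriv_neg hneg hmin.deriv_eq_zero hf
  have hconst : f =ᶠ[𝓝 t] fun _ => f t := by
    filter_upwards [hmin, hmax] with s hle hge using le_antisymm hge hle
  simp [hconst.deriv.deriv_eq] at hneg

variable {E : Type*} [NormedAddCommGroup E] [NormedSpace ℝ E] {v : E → ℝ} {x : E}

lemma deriv_deriv_comp_line (hv : ContDiffAt ℝ 2 v x) (e : E) :
    deriv (deriv fun t : ℝ => v (x + t • e)) 0 = iteratedFDeriv ℝ 2 v x ![e, e] := by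
  have hline (t : ℝ) : HasDerivAt (fun t : ℝ => x + t • e) e t := by
    simpa using ((hasDerivAt_id t).smul_const e).const_add x
  have hlim : Tendsto (fun t : ℝ => x + t • e) (𝓝 0) (𝓝 x) := by
    simpa using (hline 0).continuousAt.tendsto
  have hfirst : deriv (fun t : ℝ => v (x + t • e)) =ᶠ[𝓝 0] fun t => fderiv ℝ v (x + t • e) e := by
    filter_upwards [hlim.eventually (hv.eventually (by simp))] with t ht
    exact ((ht.differentiableAt two_ne_zero).hasFDerivAt.comp_hasDerivAt t (hline t)).deriv
  have hsecond : HasFDerivAt (fderiv ℝ v) (fderiv ℝ (fderiv ℝ v) x) (x + (0 : ℝ) • e) := by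
    simpa using ((hv.fderiv_right (m := 1) le_rfl).differentiableAt one_ne_zero).hasFDerivAt
  rw [hfirst.deriv_eq, iteratedFDeriv_two_apply]
  exact ((ContinuousLinearMap.apply ℝ ℝ e).hasFDerivAt.comp_hasDerivAt (0 : ℝ)
    (hsecond.comp_hasDerivAt 0 (hline 0))).deriv

lemma iteratedFDeriv_two_nonneg_of_isLocalMin (hv : ContDiffAt ℝ 2 v x) (hmin : IsLocalMin v x)
    (e : E) : 0 ≤ iteratedFDeriv ℝ 2 v x ![e, e] := by
  have hline : ContinuousAt (fun t : ℝ => x + t • e) 0 := by fun_prop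
  rw [← deriv_deriv_comp_line hv e]
  refine deriv_deriv_nonneg_of_isLocalMin ?_ ?_
  · exact IsLocalMin.comp_continuous (b := (0 : ℝ)) (g := fun t : ℝ => x + t • e)
      (by simpa using hmin) hline
  · exact ContinuousAt.comp (by simpa using hv.continuousAt) hline

end SecondDerivativeTest

section Laplacian

variable {E : Type*} [NormedAddCommGroup E] [InnerProductSpace ℝ E]

lemma hasFDerivAt_dist_right {a x : E} (hx : x ≠ a) :
    HasFDerivAt (fun y => dist y a) ((dist x a)⁻¹ • innerSL ℝ (x - a)) x := by
  have hsq : HasFDerivAt (fun y : E => ‖y - a‖ ^ 2) (2 • innerSL ℝ (x - a)) x := by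
    simpa using ((hasFDerivAt_id x).sub_const a).norm_sq
  have hsqrt := hsq.sqrt (pow_ne_zero 2 (norm_ne_zero_iff.2 (sub_ne_zero.2 hx)))
  simp only [← dist_eq_norm, Real.sqrt_sq dist_nonneg] at hsqrt
  refine hsqrt.congr_fderiv ?_
  ext v
  simp only [smul_apply, smul_eq_mul]
  ring

lemma iteratedFDeriv_two_comp_dist {h h' : ℝ → ℝ} {h'' : ℝ} {a x : E} (hx : x ≠ a)
    (hh : ∀ᶠ r in 𝓝 (dist x a), HasDerivAt h (h' r) r) (hh' : HasDerivAt h' h'' (dist x a))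
    (e : E) :
    iteratedFDeriv ℝ 2 (fun y => h (dist y a)) x ![e, e] =
      h' (dist x a) / dist x a * ‖e‖ ^ 2 +
        (h'' * dist x a - h' (dist x a)) / dist x a ^ 3 * inner ℝ (x - a) e ^ 2 := by
  have hr : dist x a ≠ 0 := dist_ne_zero.2 hx
  have hgrad : fderiv ℝ (fun y => h (dist y a)) =ᶠ[𝓝 x]
      fun y => (h' (dist y a) / dist y a) • innerSL ℝ (y - a) := by
    have hdist : Tendsto (fun y => dist y a) (𝓝 x) (𝓝 (dist x a)) :=
      (continuous_id.dist continuous_const).tendsto x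
    filter_upwards [isOpen_ne.mem_nhds hx, hdist.eventually hh] with y hy hhy
    have hcomp : HasFDerivAt (fun y => h (dist y a)) _ y :=
      hhy.comp_hasFDerivAt y (hasFDerivAt_dist_right hy)
    rw [hcomp.fderiv, smul_smul, div_eq_mul_inv]
  have hcoef : HasFDerivAt (fun y => h' (dist y a) / dist y a)
      (((h'' * dist x a - h' (dist x a)) / dist x a ^ 2) •
        (dist x a)⁻¹ • innerSL ℝ (x - a)) x := by
    have hquot : HasDerivAt (fun r => h' r / r) ((h'' * dist x a - h' (dist x a)) / dist x a ^ 2)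
        (dist x a) := by simpa using hh'.fun_div (hasDerivAt_id _) hr
    exact hquot.comp_hasFDerivAt x (hasFDerivAt_dist_right hx)
  have hdual : HasFDerivAt (fun y : E => innerSL ℝ (y - a)) (innerSL ℝ (E := E)) x :=
    (innerSL ℝ (E := E)).hasFDerivAt.comp x ((hasFDerivAt_id x).sub_const a)
  rw [iteratedFDeriv_two_apply, hgrad.fderiv_eq, (hcoef.fun_smul hdual).fderiv]
  have hself : (innerSL ℝ : E →L[ℝ] E →L[ℝ] ℝ) e e = ‖e‖ ^ 2 := by
    rw [innerSL_apply_apply, real_inner_self_eq_norm_sq]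
  simp only [add_apply, smul_apply, ContinuousLinearMap.smulRight_apply, smul_eq_mul,
    Matrix.cons_val_zero, Matrix.cons_val_one, hself]
  rw [innerSL_apply_apply]
  field_simp

variable [FiniteDimensional ℝ E]

lemma laplacian_nonneg_of_isLocalMin {v : E → ℝ} {x : E} (hv : ContDiffAt ℝ 2 v x)
    (hmin : IsLocalMin v x) : 0 ≤ Δ v x := by
  rw [laplacian_eq_iteratedFDeriv_stdOrthonormalBasis]
  exact Finset.sum_nonneg fun _ _ => iteratedFDeriv_two_nonneg_of_isLocalMin hv hmin _

lemma laplacian_finset_sum {ι : Type*} {s : Finset ι} {f : ι → E → ℝ} {x : E}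
    (hf : ∀ i ∈ s, ContDiffAt ℝ 2 (f i) x) :
    Δ (fun y => ∑ i ∈ s, f i y) x = ∑ i ∈ s, Δ (f i) x := by
  simp only [laplacian_eq_iteratedFDeriv_stdOrthonormalBasis]
  rw [iteratedFDeriv_fun_sum_apply hf, Finset.sum_comm]
  simp only [sum_apply]

lemma laplacian_comp_dist {h h' : ℝ → ℝ} {h'' : ℝ} {a x : E} (hx : x ≠ a)
    (hh : ∀ᶠ r in 𝓝 (dist x a), HasDerivAt h (h' r) r) (hh' : HasDerivAt h' h'' (dist x a)) :
    Δ (fun y => h (dist y a)) x =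
      h'' + (Module.finrank ℝ E - 1) / dist x a * h' (dist x a) := by
  have hr : dist x a ≠ 0 := dist_ne_zero.2 hx
  rw [laplacian_eq_iteratedFDeriv_stdOrthonormalBasis]
  simp only [iteratedFDeriv_two_comp_dist hx hh hh',
    (stdOrthonormalBasis ℝ E).norm_eq_one, one_pow, mul_one, Finset.sum_add_distrib,
    Finset.sum_const, Finset.card_univ, Fintype.card_fin, nsmul_eq_mul, ← Finset.mul_sum,
    (stdOrthonormalBasis ℝ E).sum_sq_inner_left, ← dist_eq_norm]
  field_simp
  ring

lemma laplacian_const_mul_dist_sq_sub {a x : E} (hx : x ≠ a) (c d : ℝ) :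
    Δ (fun y => c * (dist y a ^ 2 - d)) x = 2 * c * Module.finrank ℝ E := by
  have hh (r : ℝ) : HasDerivAt (fun r : ℝ => c * (r ^ 2 - d)) (2 * c * r) r := by
    refine (((hasDerivAt_pow 2 r).sub_const d).const_mul c).congr_deriv ?_
    simp only [Nat.cast_ofNat, Nat.add_one_sub_one, pow_one]
    ring
  have hh' (r : ℝ) : HasDerivAt (fun r : ℝ => 2 * c * r) (2 * c) r := by
    simpa using (hasDerivAt_id r).const_mul (2 * c)
  have hr : dist x a ≠ 0 := dist_ne_zero.2 hx
  rw [laplacian_comp_dist (h := fun r => c * (r ^ 2 - d)) hx (.of_forall hh) (hh' _)]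
  field_simp
  ring

lemma laplacian_eq_innerProductSpace_laplacian {N : ℕ} (u : EuclideanSpace ℝ (Fin N) → ℝ)
    (x : EuclideanSpace ℝ (Fin N)) : _root_.laplacian u x = Δ u x := by
  rw [laplacian_eq_iteratedFDeriv_orthonormalBasis u (EuclideanSpace.basisFun (Fin N) ℝ)]
  simp [_root_.laplacian]

end Laplacian

section SphericalComparison

lemma isCompact_setOf_dist_mem {X : Type*} [PseudoMetricSpace X] [ProperSpace X] (a : X)
    {J : Set ℝ} (hJ : IsCompact J) : IsCompact {x | dist x a ∈ J} := by
  obtain ⟨R, hR⟩ := hJ.bddAbove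
  refine (isCompact_closedBall a R).of_isClosed_subset ?_ fun x hx => hR hx
  exact hJ.isClosed.preimage (continuous_id.dist continuous_const)

variable {E : Type*} [NormedAddCommGroup E] [InnerProductSpace ℝ E] [FiniteDimensional ℝ E]
  {u : E → ℝ} {h : ℝ → ℝ} {a : E} {J : Set ℝ}

lemma radial_le_of_laplacian_lt (hJ : IsCompact J)
    (hu : ∀ x, dist x a ∈ J → ContDiffAt ℝ 2 u x)
    (hh : ∀ x, dist x a ∈ J → ContDiffAt ℝ 2 (fun y => h (dist y a)) x)
    (hfrontier : ∀ x, dist x a ∈ frontier J → h (dist x a) ≤ u x)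
    (hlap : ∀ x, dist x a ∈ interior J → IsMinOn u (sphere a (dist x a)) x →
      Δ u x < Δ (fun y => h (dist y a)) x) (x : E) (hx : dist x a ∈ J) :
    h (dist x a) ≤ u x := by
  set w : E → ℝ := fun y => h (dist y a)
  have hcont : ContinuousOn (u - w) {y | dist y a ∈ J} := fun y hy =>
    ((hu y hy).sub (hh y hy)).continuousAt.continuousWithinAt
  obtain ⟨z, hz, hmin⟩ := (isCompact_setOf_dist_mem a hJ).exists_isMinOn ⟨x, hx⟩ hcont
  suffices hzle : w z ≤ u z from sub_nonneg.1 ((sub_nonneg.2 hzle).trans (hmin hx))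
  by_contra! hlt
  have hint : dist z a ∈ interior J := by
    by_contra hnot
    exact hlt.not_ge (hfrontier z ⟨subset_closure hz, hnot⟩)
  have hsphere : IsMinOn u (sphere a (dist z a)) z := fun y hy => by
    have hle : u z - w z ≤ u y - w y := hmin (show dist y a ∈ J from mem_sphere.1 hy ▸ hz)
    simpa [w, mem_sphere.1 hy] using hle
  have hlocal : IsLocalMin (u - w) z :=
    hmin.isLocalMin ((continuous_id.dist continuous_const).continuousAt.preimage_mem_nhds
      (mem_interior_iff_mem_nhds.1 hint))
  have hnonneg : 0 ≤ Δ (u - w) z := laplacian_nonneg_of_isLocalMin ((hu z hz).sub (hh z hz)) hlocal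
  rw [(hu z hz).laplacian_sub (hh z hz)] at hnonneg
  linarith [hlap z hint hsphere]

lemma radial_le_of_laplacian_le [Nontrivial E] (hJ : IsCompact J) (hJpos : J ⊆ Ioi 0)
    (hu : ∀ x, dist x a ∈ J → ContDiffAt ℝ 2 u x)
    (hh : ∀ x, dist x a ∈ J → ContDiffAt ℝ 2 (fun y => h (dist y a)) x)
    (hfrontier : ∀ x, dist x a ∈ frontier J → h (dist x a) ≤ u x)
    (hlap : ∀ x, dist x a ∈ interior J → IsMinOn u (sphere a (dist x a)) x →
      Δ u x ≤ Δ (fun y => h (dist y a)) x) (x : E) (hx : dist x a ∈ J) :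
    h (dist x a) ≤ u x := by
  obtain ⟨R, hR⟩ := hJ.bddAbove
  have hsq {y : E} (hy : dist y a ∈ J) : dist y a ^ 2 ≤ R ^ 2 :=
    pow_le_pow_left₀ dist_nonneg (hR hy) 2
  -- `ε (dist² - R²)` is strictly subharmonic and nonpositive on the region.
  have hperturbed (ε : ℝ) (hε : 0 < ε) : h (dist x a) + ε * (dist x a ^ 2 - R ^ 2) ≤ u x := by
    have hne {y : E} (hy : dist y a ∈ J) : y ≠ a := dist_pos.1 (hJpos hy)
    have hquad (y : E) (hy : dist y a ∈ J) :
        ContDiffAt ℝ 2 (fun y => ε * (dist y a ^ 2 - R ^ 2)) y :=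
      contDiffAt_const.mul (((contDiffAt_id.dist ℝ contDiffAt_const (hne hy)).pow 2).sub
        contDiffAt_const)
    refine radial_le_of_laplacian_lt (h := fun r => h r + ε * (r ^ 2 - R ^ 2)) hJ hu
      (fun y hy => (hh y hy).add (hquad y hy)) (fun y hy => ?_) (fun y hy hmin => ?_) x hx
    · have hε_nonpos := mul_nonpos_of_nonneg_of_nonpos hε.le
        (sub_nonpos.2 (hsq (hJ.isClosed.frontier_subset hy)))
      linarith [hfrontier y hy]
    · have hyJ := interior_subset hy
      have hΔ := (hh y hyJ).laplacian_add (hquad y hyJ)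
      rw [laplacian_const_mul_dist_sq_sub (hne hyJ)] at hΔ
      have hdim : (0 : ℝ) < Module.finrank ℝ E := mod_cast Module.finrank_pos
      refine (hlap y hy hmin).trans_lt (lt_of_lt_of_eq ?_ hΔ.symm)
      linarith [mul_pos (mul_pos two_pos hε) hdim]
  refine le_of_forall_pos_le_add fun δ hδ => ?_
  have hδ' := hperturbed (δ / (R ^ 2 + 1)) (by positivity)
  have : δ / (R ^ 2 + 1) * (R ^ 2 - dist x a ^ 2) ≤ δ := by
    rw [div_mul_eq_mul_div, div_le_iff₀ (by positivity)]
    gcongr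
    nlinarith [sq_nonneg (dist x a)]
  linarith

end SphericalComparison

section RadialBarrier

lemma hasDerivAt_div_pow {f : ℝ → ℝ} {f' r : ℝ} (hf : HasDerivAt f f' r) (hr : r ≠ 0) (n : ℕ) :
    HasDerivAt (fun t => f t / t ^ n) (f' / r ^ n - n * f r / r ^ (n + 1)) r := by
  refine (hf.fun_div (hasDerivAt_pow n r) (pow_ne_zero n hr)).congr_deriv ?_
  cases n with
  | zero => simp
  | succ n =>
    rw [Nat.add_sub_cancel]
    field_simp
    ring

lemma contDiffOn_succ_of_hasDerivAt {f f' : ℝ → ℝ} {s : Set ℝ} {m : ℕ} (hs : IsOpen s)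
    (hf : ∀ r ∈ s, HasDerivAt f (f' r) r) (hf' : ContDiffOn ℝ m f' s) :
    ContDiffOn ℝ (m + 1) f s := by
  refine (contDiffOn_succ_iff_deriv_of_isOpen hs).2 ⟨fun r hr => ?_, by simp, ?_⟩
  · exact (hf r hr).differentiableAt.differentiableWithinAt
  · exact hf'.congr fun r hr => (hf r hr).deriv

/-- The `m`-th moment `∫₁ʳ tᵐ Φ(t) dt` of a density `Φ` on the half-line, based at `1` so that it
makes sense for densities which are singular at the origin. -/
noncomputable def moment (m : ℕ) (Φ : ℝ → ℝ) (r : ℝ) : ℝ :=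
  ∫ t in (1 : ℝ)..r, t ^ m * Φ t

/-- The solution `k` of the radial Poisson equation `k'' + (n + 1) k' / r = Φ` in dimension `n + 2`
with `k 1 = k' 1 = 0`. -/
noncomputable def radialPotential (n : ℕ) (Φ : ℝ → ℝ) (r : ℝ) : ℝ :=
  (moment 1 Φ r - moment (n + 1) Φ r / r ^ n) / n

/-- The general radial solution of `-Δ w = Φ` in dimension `n + 2` away from the origin: the radial
harmonic function `α + β / rⁿ` minus the radial potential of `Φ`. -/
noncomputable def radialBarrier (n : ℕ) (α β : ℝ) (Φ : ℝ → ℝ) (r : ℝ) : ℝ :=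
  α + β / r ^ n - radialPotential n Φ r

variable {m n : ℕ} {Φ : ℝ → ℝ} {α β r s : ℝ}

lemma moment_apply_one (m : ℕ) (Φ : ℝ → ℝ) : moment m Φ 1 = 0 :=
  intervalIntegral.integral_same

section Regularity

variable (hΦ : ContinuousOn Φ (Ioi 0))
include hΦ

lemma intervalIntegrable_pow_mul (m : ℕ) (hr : 0 < r) (hs : 0 < s) :
    IntervalIntegrable (fun t => t ^ m * Φ t) volume r s :=
  (((continuousOn_id.pow m).mul hΦ).mono
    (ordConnected_Ioi.uIcc_subset hr hs)).intervalIntegrable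

lemma moment_sub_moment (hr : 0 < r) (hs : 0 < s) :
    moment m Φ s - moment m Φ r = ∫ t in r..s, t ^ m * Φ t :=
  intervalIntegral.integral_interval_sub_left (intervalIntegrable_pow_mul hΦ m one_pos hs)
    (intervalIntegrable_pow_mul hΦ m one_pos hr)

lemma hasDerivAt_moment (m : ℕ) (hr : 0 < r) : HasDerivAt (moment m Φ) (r ^ m * Φ r) r := by
  have hcont : ContinuousOn (fun t => t ^ m * Φ t) (Ioi 0) := (continuousOn_id.pow m).mul hΦ
  exact intervalIntegral.integral_hasDerivAt_right (intervalIntegrable_pow_mul hΦ m one_pos hr)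
    (hcont.stronglyMeasurableAtFilter isOpen_Ioi r hr) (hcont.continuousAt (Ioi_mem_nhds hr))

lemma contDiffOn_moment (m : ℕ) : ContDiffOn ℝ 1 (moment m Φ) (Ioi 0) := by
  simpa using contDiffOn_succ_of_hasDerivAt (m := 0) isOpen_Ioi
    (fun r hr => hasDerivAt_moment hΦ m hr) (contDiffOn_zero.2 ((continuousOn_id.pow m).mul hΦ))

lemma hasDerivAt_radialBarrier (hn : n ≠ 0) (hr : 0 < r) :
    HasDerivAt (radialBarrier n α β Φ) (-(n * β + moment (n + 1) Φ r) / r ^ (n + 1)) r := by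
  have hpotential := ((hasDerivAt_moment hΦ 1 hr).sub
    (hasDerivAt_div_pow (hasDerivAt_moment hΦ (n + 1) hr) hr.ne' n)).div_const (n : ℝ)
  have hharmonic := (hasDerivAt_div_pow (hasDerivAt_const r β) hr.ne' n).const_add α
  refine (hharmonic.sub hpotential).congr_deriv ?_
  field_simp
  ring

lemma hasDerivAt_deriv_radialBarrier (n : ℕ) (β : ℝ) (hr : 0 < r) :
    HasDerivAt (fun t => -(n * β + moment (n + 1) Φ t) / t ^ (n + 1))
      ((n + 1) * (n * β + moment (n + 1) Φ r) / r ^ (n + 2) - Φ r) r := by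
  refine (hasDerivAt_div_pow ((hasDerivAt_moment hΦ (n + 1) hr).const_add (n * β)).fun_neg
    hr.ne' (n + 1)).congr_deriv ?_
  push_cast
  field_simp
  ring

lemma contDiffOn_radialBarrier (hn : n ≠ 0) :
    ContDiffOn ℝ 2 (radialBarrier n α β Φ) (Ioi 0) := by
  refine contDiffOn_succ_of_hasDerivAt (m := 1) isOpen_Ioi
    (fun r hr => hasDerivAt_radialBarrier hΦ hn hr) ?_
  exact (contDiffOn_const.add (contDiffOn_moment hΦ (n + 1))).neg.div (contDiffOn_id.pow _)
    fun r hr => pow_ne_zero _ (ne_of_gt hr)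

variable {E : Type*} [NormedAddCommGroup E] [InnerProductSpace ℝ E] {a x : E}

lemma contDiffAt_radialBarrier_dist (hn : n ≠ 0) (hx : x ≠ a) :
    ContDiffAt ℝ 2 (fun y => radialBarrier n α β Φ (dist y a)) x :=
  ((contDiffOn_radialBarrier hΦ hn).contDiffAt (Ioi_mem_nhds (dist_pos.2 hx))).comp x
    (contDiffAt_id.dist ℝ contDiffAt_const hx)

lemma laplacian_radialBarrier_dist [FiniteDimensional ℝ E] (hE : Module.finrank ℝ E = n + 2)
    (hn : n ≠ 0) (hx : x ≠ a) :
    Δ (fun y => radialBarrier n α β Φ (dist y a)) x = -Φ (dist x a) := by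
  have hr : 0 < dist x a := dist_pos.2 hx
  rw [laplacian_comp_dist hx
    ((eventually_gt_nhds hr).mono fun t ht => hasDerivAt_radialBarrier hΦ hn ht)
    (hasDerivAt_deriv_radialBarrier hΦ n β hr), hE]
  push_cast
  field_simp
  ring

end Regularity

section Bounds

lemma pow_mul_two_le_two_mul_pow (hn : n ≠ 0) (hr : 0 ≤ r) : r ^ n * 2 ≤ (2 * r) ^ n := by
  rw [mul_pow, mul_comm]
  gcongr
  simpa using pow_le_pow_right₀ one_le_two (Nat.one_le_iff_ne_zero.2 hn)

variable (hΦ0 : ∀ t, 0 < t → 0 ≤ Φ t)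
include hΦ0

lemma moment_nonneg (hr : 1 ≤ r) : 0 ≤ moment m Φ r :=
  intervalIntegral.integral_nonneg hr fun t ht =>
    have ht0 := one_pos.trans_le ht.1
    mul_nonneg (pow_nonneg ht0.le m) (hΦ0 t ht0)

lemma moment_nonpos (hr : 0 < r) (hr1 : r ≤ 1) : moment m Φ r ≤ 0 := by
  rw [moment, intervalIntegral.integral_symm]
  refine neg_nonpos.2 (intervalIntegral.integral_nonneg hr1 fun t ht => ?_)
  have ht0 := hr.trans_le ht.1
  exact mul_nonneg (pow_nonneg ht0.le m) (hΦ0 t ht0)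

variable (hΦ : ContinuousOn Φ (Ioi 0))
include hΦ

lemma pow_mul_moment_sub_le (hr : 0 < r) (hrs : r ≤ s) :
    r ^ n * (moment m Φ s - moment m Φ r) ≤ moment (n + m) Φ s - moment (n + m) Φ r := by
  have hs := hr.trans_le hrs
  rw [moment_sub_moment hΦ hr hs, moment_sub_moment hΦ hr hs,
    ← intervalIntegral.integral_const_mul]
  refine intervalIntegral.integral_mono_on hrs ((intervalIntegrable_pow_mul hΦ m hr hs).const_mul _)
    (intervalIntegrable_pow_mul hΦ _ hr hs) fun t ht => ?_
  have ht0 := hr.trans_le ht.1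
  rw [pow_add, mul_assoc]
  exact mul_le_mul_of_nonneg_right (pow_le_pow_left₀ hr.le ht.1 n)
    (mul_nonneg (pow_nonneg ht0.le m) (hΦ0 t ht0))

lemma moment_sub_le_pow_mul (hr : 0 < r) (hrs : r ≤ s) :
    moment (n + m) Φ s - moment (n + m) Φ r ≤ s ^ n * (moment m Φ s - moment m Φ r) := by
  have hs := hr.trans_le hrs
  rw [moment_sub_moment hΦ hr hs, moment_sub_moment hΦ hr hs,
    ← intervalIntegral.integral_const_mul]
  refine intervalIntegral.integral_mono_on hrs (intervalIntegrable_pow_mul hΦ _ hr hs)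
    ((intervalIntegrable_pow_mul hΦ m hr hs).const_mul _) fun t ht => ?_
  have ht0 := hr.trans_le ht.1
  rw [pow_add, mul_assoc]
  exact mul_le_mul_of_nonneg_right (pow_le_pow_left₀ ht0.le ht.2 n)
    (mul_nonneg (pow_nonneg ht0.le m) (hΦ0 t ht0))

lemma radialPotential_nonneg (hr : 0 < r) : 0 ≤ radialPotential n Φ r := by
  refine div_nonneg (sub_nonneg.2 ((div_le_iff₀ (by positivity)).2 ?_)) n.cast_nonneg
  rw [mul_comm]
  rcases le_total r 1 with hr1 | hr1
  · simpa [moment_apply_one] using pow_mul_moment_sub_le (n := n) (m := 1) hΦ0 hΦ hr hr1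
  · simpa [moment_apply_one] using moment_sub_le_pow_mul (n := n) (m := 1) hΦ0 hΦ one_pos hr1

lemma moment_one_le_radialPotential_two_mul (hn : n ≠ 0) (hr : 1 ≤ r) :
    moment 1 Φ r ≤ 2 * n * radialPotential n Φ (2 * r) := by
  have hr0 : 0 < r := by linarith
  have hinner : moment (n + 1) Φ r ≤ r ^ n * moment 1 Φ r := by
    simpa [moment_apply_one] using
      moment_sub_le_pow_mul (n := n) (m := 1) hΦ0 hΦ one_pos hr
  have houter : moment (n + 1) Φ (2 * r) - moment (n + 1) Φ r ≤
      (2 * r) ^ n * (moment 1 Φ (2 * r) - moment 1 Φ r) :=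
    moment_sub_le_pow_mul (n := n) (m := 1) hΦ0 hΦ hr0 (by linarith : r ≤ 2 * r)
  have hprod := mul_le_mul_of_nonneg_right (pow_mul_two_le_two_mul_pow hn hr0.le)
    (moment_nonneg hΦ0 (m := 1) hr)
  have hscaled : (2 * r) ^ n * moment 1 Φ r ≤
      (2 * r) ^ n * (2 * n * radialPotential n Φ (2 * r)) := by
    rw [radialPotential]
    field_simp
    linarith
  exact le_of_mul_le_mul_left hscaled (by positivity)

lemma neg_moment_two_mul_le_radialPotential (hn : n ≠ 0) (hr : 0 < r) (hr1 : 2 * r ≤ 1) :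
    -moment (n + 1) Φ (2 * r) ≤ 2 * n * (r ^ n * radialPotential n Φ r) := by
  have hinner : r ^ n * (moment 1 Φ (2 * r) - moment 1 Φ r) ≤
      moment (n + 1) Φ (2 * r) - moment (n + 1) Φ r :=
    pow_mul_moment_sub_le (n := n) (m := 1) hΦ0 hΦ hr (by linarith : r ≤ 2 * r)
  have houter : (2 * r) ^ n * -moment 1 Φ (2 * r) ≤ -moment (n + 1) Φ (2 * r) := by
    simpa [moment_apply_one] using
      pow_mul_moment_sub_le (n := n) (m := 1) hΦ0 hΦ (by linarith) hr1
  have hprod := mul_le_mul_of_nonneg_right (pow_mul_two_le_two_mul_pow hn hr.le)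
    (neg_nonneg.2 (moment_nonpos hΦ0 (m := 1) (by linarith) hr1))
  rw [radialPotential]
  field_simp
  linarith

end Bounds

end RadialBarrier

section Integrability

variable {n : ℕ} {Φ : ℝ → ℝ} {r M : ℝ} (hΦ0 : ∀ t, 0 < t → 0 ≤ Φ t)
include hΦ0

lemma moment_le_setIntegral_Ioi {m : ℕ} (hint : IntegrableOn (fun t => t ^ m * Φ t) (Ioi 1))
    (hr : 1 ≤ r) : moment m Φ r ≤ ∫ t in Ioi 1, t ^ m * Φ t := by
  rw [moment, intervalIntegral.integral_of_le hr]
  refine setIntegral_mono_set hint ?_ Ioc_subset_Ioi_self.eventuallyLE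
  filter_upwards [ae_restrict_mem measurableSet_Ioi] with t ht
  have ht0 := one_pos.trans (mem_Ioi.1 ht)
  exact mul_nonneg (pow_nonneg ht0.le m) (hΦ0 t ht0)

lemma neg_moment_le_setIntegral_Ioc {m : ℕ}
    (hint : IntegrableOn (fun t => t ^ m * Φ t) (Ioc 0 1)) (hr : 0 < r) (hr1 : r ≤ 1) :
    -moment m Φ r ≤ ∫ t in Ioc 0 1, t ^ m * Φ t := by
  rw [moment, ← intervalIntegral.integral_symm, intervalIntegral.integral_of_le hr1]
  refine setIntegral_mono_set hint ?_ (Ioc_subset_Ioc_left hr.le).eventuallyLE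
  filter_upwards [ae_restrict_mem measurableSet_Ioc] with t ht
  exact mul_nonneg (pow_nonneg ht.1.le m) (hΦ0 t ht.1)

lemma exists_radialPotential_le (h0 : IntegrableOn (fun t => t ^ (n + 1) * Φ t) (Ioc 0 1))
    (h1 : IntegrableOn (fun t => t * Φ t) (Ioi 1)) :
    ∃ C, ∀ r, 0 < r → radialPotential n Φ r ≤ C + C / r ^ n := by
  set A := ∫ t in Ioc 0 1, t ^ (n + 1) * Φ t
  set B := ∫ t in Ioi 1, t ^ 1 * Φ t
  have h1' : IntegrableOn (fun t => t ^ 1 * Φ t) (Ioi 1) := by simpa only [pow_one] using h1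
  have hA : 0 ≤ A :=
    setIntegral_nonneg measurableSet_Ioc fun t ht => mul_nonneg (pow_nonneg ht.1.le _) (hΦ0 t ht.1)
  have hB : 0 ≤ B := setIntegral_nonneg measurableSet_Ioi fun t ht =>
    have ht0 := one_pos.trans (mem_Ioi.1 ht)
    mul_nonneg (pow_nonneg ht0.le _) (hΦ0 t ht0)
  refine ⟨(A + B) / n, fun r hr => ?_⟩
  suffices hle : moment 1 Φ r - moment (n + 1) Φ r / r ^ n ≤ A + B + (A + B) / r ^ n by
    calc radialPotential n Φ r ≤ (A + B + (A + B) / r ^ n) / n := by unfold radialPotential; gcongr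
      _ = (A + B) / n + (A + B) / n / r ^ n := by ring
  have hdiv : 0 ≤ B / r ^ n := by positivity
  rcases le_total 1 r with hr1 | hr1
  · have hQ : moment 1 Φ r ≤ B := moment_le_setIntegral_Ioi hΦ0 h1' hr1
    have hP : 0 ≤ moment (n + 1) Φ r / r ^ n := div_nonneg (moment_nonneg hΦ0 hr1) (by positivity)
    have hA' : 0 ≤ A / r ^ n := by positivity
    rw [add_div]
    linarith
  · have hQ : moment 1 Φ r ≤ 0 := moment_nonpos hΦ0 hr hr1
    have hP : -moment (n + 1) Φ r / r ^ n ≤ A / r ^ n := by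
      gcongr
      exact neg_moment_le_setIntegral_Ioc hΦ0 h0 hr hr1
    rw [neg_div] at hP
    rw [add_div]
    linarith

variable (hΦ : ContinuousOn Φ (Ioi 0))
include hΦ

lemma integrableOn_Ioi_of_radialPotential_le (hn : n ≠ 0)
    (hM : ∀ᶠ r in atTop, radialPotential n Φ r ≤ M) :
    IntegrableOn (fun t => t * Φ t) (Ioi 1) := by
  have hcont : ContinuousOn (fun t => t * Φ t) (Ioi 0) := continuousOn_id.mul hΦ
  refine integrableOn_Ioi_of_intervalIntegral_norm_bounded (2 * n * M) 1 (fun b => ?_) tendsto_id ?_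
  · have hIcc : Icc 1 b ⊆ Ioi 0 := fun t ht => one_pos.trans_le ht.1
    exact (hcont.mono hIcc).integrableOn_Icc.mono_set Ioc_subset_Icc_self
  · filter_upwards [eventually_ge_atTop 1,
      (tendsto_id.const_mul_atTop two_pos).eventually hM] with b hb hMb
    calc ∫ t in (1 : ℝ)..b, ‖t * Φ t‖ = moment 1 Φ b := by
          refine intervalIntegral.integral_congr fun t ht => ?_
          rw [uIcc_of_le hb] at ht
          have ht0 := one_pos.trans_le ht.1
          simp [abs_of_pos ht0, abs_of_nonneg (hΦ0 t ht0)]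
      _ ≤ 2 * n * radialPotential n Φ (2 * b) :=
          moment_one_le_radialPotential_two_mul hΦ0 hΦ hn hb
      _ ≤ 2 * n * M := by gcongr; exact hMb

lemma integrableOn_Ioc_of_radialPotential_le (hn : n ≠ 0)
    (hM : ∀ᶠ r in 𝓝[>] 0, r ^ n * radialPotential n Φ r ≤ M) :
    IntegrableOn (fun t => t ^ (n + 1) * Φ t) (Ioc 0 1) := by
  have hcont : ContinuousOn (fun t => t ^ (n + 1) * Φ t) (Ioi 0) := (continuousOn_id.pow _).mul hΦ
  have hlim : Tendsto (fun i => 2 * Real.exp i) atBot (𝓝 0) := by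
    simpa using Real.tendsto_exp_atBot.const_mul 2
  refine integrableOn_Ioc_of_intervalIntegral_norm_bounded_left (I := 2 * n * M) (l := atBot)
    (fun i => ?_) hlim ?_
  · have hIcc : Icc (2 * Real.exp i) 1 ⊆ Ioi 0 := fun t ht =>
      (mul_pos two_pos (Real.exp_pos i)).trans_le ht.1
    exact (hcont.mono hIcc).integrableOn_Icc.mono_set Ioc_subset_Icc_self
  · filter_upwards [hlim.eventually_le_const one_pos,
      Real.tendsto_exp_atBot_nhdsGT.eventually hM] with i hi hMi
    have hpos : 0 < 2 * Real.exp i := by positivity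
    calc ∫ t in Ioc (2 * Real.exp i) 1, ‖t ^ (n + 1) * Φ t‖
        = -moment (n + 1) Φ (2 * Real.exp i) := by
          rw [moment, ← intervalIntegral.integral_symm, intervalIntegral.integral_of_le hi]
          refine setIntegral_congr_fun measurableSet_Ioc fun t ht => ?_
          have ht0 := hpos.trans ht.1
          simp [abs_of_pos ht0, abs_of_nonneg (hΦ0 t ht0)]
      _ ≤ 2 * n * (Real.exp i ^ n * radialPotential n Φ (Real.exp i)) :=
          neg_moment_two_mul_le_radialPotential hΦ0 hΦ hn (Real.exp_pos i) hi
      _ ≤ 2 * n * M := by gcongr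

end Integrability

section Necessity

lemma frontier_uIcc_subset {r s : ℝ} : frontier (uIcc r s) ⊆ {r, s} := by
  rcases le_total r s with h | h
  · rw [uIcc_of_le h, frontier_Icc h]
  · rw [uIcc_of_ge h, frontier_Icc h, pair_comm]

variable {E : Type*} [NormedAddCommGroup E] [InnerProductSpace ℝ E] [FiniteDimensional ℝ E]

/-- A positive `C²` function `u` with `-Δ u ≥ Φ(|x - a|)` on the shell `{x | |x - a| ∈ I}`. The
inequality is only required at the points which minimise `u` on their sphere about `a`: this
suffices for comparison with radial functions, and it is there that upper bounds on `u` hold. -/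
structure IsRadialSupersolution (u : E → ℝ) (a : E) (I : Set ℝ) (Φ : ℝ → ℝ) : Prop where
  contDiffAt : ∀ x, dist x a ∈ I → ContDiffAt ℝ 2 u x
  pos : ∀ x, dist x a ∈ I → 0 < u x
  le_neg_laplacian : ∀ x, dist x a ∈ I → IsMinOn u (sphere a (dist x a)) x →
    Φ (dist x a) ≤ -Δ u x

variable {u : E → ℝ} {a : E} {I : Set ℝ} {Φ φ : ℝ → ℝ} {n : ℕ} {p α β ρ s : ℝ}

lemma IsRadialSupersolution.radialBarrier_le (hE : Module.finrank ℝ E = n + 2) (hn : n ≠ 0)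
    (hΦ : ContinuousOn Φ (Ioi 0)) {r s : ℝ} (hI : uIcc r s ⊆ Ioi 0)
    (hu : IsRadialSupersolution u a (uIcc r s) Φ)
    (hr : ∀ x, dist x a = r → radialBarrier n α β Φ r ≤ u x)
    (hs : ∀ x, dist x a = s → radialBarrier n α β Φ s ≤ u x) (x : E) (hx : dist x a ∈ uIcc r s) :
    radialBarrier n α β Φ (dist x a) ≤ u x := by
  have := Module.nontrivial_of_finrank_eq_succ hE
  have hne {y : E} (hy : dist y a ∈ uIcc r s) : y ≠ a := dist_pos.1 (hI hy)
  refine radial_le_of_laplacian_le isCompact_uIcc hI hu.contDiffAt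
    (fun y hy => contDiffAt_radialBarrier_dist hΦ hn (hne hy)) (fun y hy => ?_)
    (fun y hy hmin => ?_) x hx
  · rcases frontier_uIcc_subset hy with hy' | hy'
    · exact hy' ▸ hr y hy'
    · exact hy' ▸ hs y hy'
  · rw [laplacian_radialBarrier_dist hΦ hE hn (hne (interior_subset hy))]
    exact le_neg_of_le_neg (hu.le_neg_laplacian y (interior_subset hy) hmin)

lemma IsRadialSupersolution.mono {I' : Set ℝ} (hu : IsRadialSupersolution u a I Φ) (h : I' ⊆ I) :
    IsRadialSupersolution u a I' Φ where
  contDiffAt x hx := hu.contDiffAt x (h hx)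
  pos x hx := hu.pos x (h hx)
  le_neg_laplacian x hx := hu.le_neg_laplacian x (h hx)

lemma IsRadialSupersolution.exists_le_and_radialPotential_le (hE : Module.finrank ℝ E = n + 2)
    (hn : n ≠ 0) (hΦ0 : ∀ t, 0 < t → 0 ≤ Φ t) (hΦ : ContinuousOn Φ (Ioi 0)) (hI : I ⊆ Ioi 0)
    (hIconn : I.OrdConnected) (hu : IsRadialSupersolution u a I Φ) (hρ : ρ ∈ I) (hs : s ∈ I)
    (hρ0 : α + β / ρ ^ n = 0) (hspos : 0 < α + β / s ^ n) :
    ∃ M > 0, ∀ r ∈ I, s ∈ uIcc ρ r →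
      (∃ x, dist x a = r ∧ u x ≤ M * (α + β / r ^ n)) ∧
        radialPotential n Φ r ≤ M * (α + β / r ^ n) := by
  have := Module.nontrivial_of_finrank_eq_succ hE
  obtain ⟨z, hz⟩ := NormedSpace.sphere_nonempty (x := a) (E := E) |>.2 (hI hs).le
  have hzI : dist z a ∈ I := mem_sphere.1 hz ▸ hs
  set M := (u z + radialPotential n Φ s) / (α + β / s ^ n) + 1 with hM
  have hM0 : 0 < M := by
    have := hu.pos z hzI
    have := radialPotential_nonneg (n := n) hΦ0 hΦ (hI hs)
    positivity
  have hMs : u z < radialBarrier n (M * α) (M * β) Φ s := by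
    have hmul : M * (α + β / s ^ n) = u z + radialPotential n Φ s + (α + β / s ^ n) := by
      rw [hM, add_mul, div_mul_cancel₀ _ hspos.ne', one_mul]
    rw [radialBarrier, mul_div_assoc, ← mul_add, hmul]
    linarith
  refine ⟨M, hM0, fun r hr hsr => ?_⟩
  suffices hsum : ∃ x, dist x a = r ∧ u x + radialPotential n Φ r ≤ M * (α + β / r ^ n) by
    obtain ⟨x, hxr, hx⟩ := hsum
    have := radialPotential_nonneg (n := n) hΦ0 hΦ (hI hr)
    have := hu.pos x (hxr ▸ hr)
    exact ⟨⟨x, hxr, by linarith⟩, by linarith⟩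
  by_contra! hlt
  have hJ : uIcc ρ r ⊆ I := hIconn.uIcc_subset hρ hr
  refine hMs.not_ge ?_
  rw [← mem_sphere.1 hz] at hsr ⊢
  refine (hu.mono hJ).radialBarrier_le hE hn hΦ (hJ.trans hI) (fun x hx => ?_) (fun x hx => ?_)
    z hsr
  · rw [radialBarrier, mul_div_assoc, ← mul_add, hρ0, mul_zero, zero_sub]
    have := radialPotential_nonneg (n := n) hΦ0 hΦ (hI hρ)
    have := hu.pos x (hx ▸ hρ)
    linarith
  · rw [radialBarrier, mul_div_assoc, ← mul_add]
    linarith [hlt x hx]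

lemma IsRadialSupersolution.exists_le_div_pow_and_radialPotential_le
    (hE : Module.finrank ℝ E = n + 2) (hn : n ≠ 0) (hΦ0 : ∀ t, 0 < t → 0 ≤ Φ t)
    (hΦ : ContinuousOn Φ (Ioi 0)) (hρ : 0 < ρ) (hu : IsRadialSupersolution u a (Ioc 0 ρ) Φ) :
    ∃ M > 0, ∀ r ∈ Ioc 0 (ρ / 2),
      (∃ x, dist x a = r ∧ u x ≤ M / r ^ n) ∧ radialPotential n Φ r ≤ M / r ^ n := by
  have hpow : (ρ / 2) ^ n < ρ ^ n := pow_lt_pow_left₀ (by linarith) (by positivity) hn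
  obtain ⟨M, hM, hbound⟩ := hu.exists_le_and_radialPotential_le (α := -(1 / ρ ^ n)) (β := 1)
    (ρ := ρ) (s := ρ / 2) hE hn hΦ0 hΦ Ioc_subset_Ioi_self ordConnected_Ioc
    ⟨hρ, le_rfl⟩ ⟨by linarith, by linarith⟩
    (neg_add_cancel _) (by
      have := one_div_lt_one_div_of_lt (by positivity) hpow
      linarith)
  refine ⟨M, hM, fun r hr => ?_⟩
  obtain ⟨⟨x, hxr, hx⟩, hk⟩ := hbound r ⟨hr.1, by linarith [hr.2]⟩
    (Icc_subset_uIcc' ⟨hr.2, by linarith⟩)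
  have hψ : M * (-(1 / ρ ^ n) + 1 / r ^ n) ≤ M / r ^ n := by
    rw [div_eq_mul_one_div M]
    gcongr
    have : 0 < 1 / ρ ^ n := by positivity
    linarith
  exact ⟨⟨x, hxr, hx.trans hψ⟩, hk.trans hψ⟩

lemma IsRadialSupersolution.exists_le_const_and_radialPotential_le
    (hE : Module.finrank ℝ E = n + 2) (hn : n ≠ 0) (hΦ0 : ∀ t, 0 < t → 0 ≤ Φ t)
    (hΦ : ContinuousOn Φ (Ioi 0)) (hρ : 0 < ρ) (hu : IsRadialSupersolution u a (Ici ρ) Φ) :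
    ∃ M > 0, ∀ r ∈ Ici (2 * ρ),
      (∃ x, dist x a = r ∧ u x ≤ M) ∧ radialPotential n Φ r ≤ M := by
  have hpow : ρ ^ n < (2 * ρ) ^ n := pow_lt_pow_left₀ (by linarith) hρ.le hn
  obtain ⟨M, hM, hbound⟩ := hu.exists_le_and_radialPotential_le (α := 1) (β := -ρ ^ n) (ρ := ρ)
    (s := 2 * ρ) hE hn hΦ0 hΦ (Ici_subset_Ioi.2 hρ) ordConnected_Ici self_mem_Ici
    (mem_Ici.2 (by linarith)) (by field_simp; ring) (by
      have := (div_lt_one (by positivity)).2 hpow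
      rw [neg_div]
      linarith)
  refine ⟨M, hM, fun r hr => ?_⟩
  have hr' : 2 * ρ ≤ r := hr
  have hr0 : 0 < r := by linarith
  obtain ⟨⟨x, hxr, hx⟩, hk⟩ := hbound r (mem_Ici.2 (by linarith))
    (Icc_subset_uIcc ⟨by linarith, hr'⟩)
  have hψ : M * (1 + -ρ ^ n / r ^ n) ≤ M := by
    refine mul_le_of_le_one_right hM.le ?_
    have : 0 ≤ ρ ^ n / r ^ n := by positivity
    rw [neg_div]
    linarith
  exact ⟨⟨x, hxr, hx.trans hψ⟩, hk.trans hψ⟩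

section Nonlinear

variable (hφ0 : ∀ t, 0 < t → 0 ≤ φ t) (hp : 0 ≤ p) (hu : ∀ x, dist x a ∈ I → ContDiffAt ℝ 2 u x)
  (hpos : ∀ x, dist x a ∈ I → 0 < u x)
  (hineq : ∀ x, dist x a ∈ I → φ (dist x a) * u x ^ (-p) ≤ -Δ u x)
include hφ0 hu hpos hineq

lemma isRadialSupersolution_zero_of_rpow (hI : I ⊆ Ioi 0) : IsRadialSupersolution u a I 0 where
  contDiffAt := hu
  pos := hpos
  le_neg_laplacian x hx _ :=
    (mul_nonneg (hφ0 _ (hI hx)) (Real.rpow_nonneg (hpos x hx).le _)).trans (hineq x hx)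

include hp

lemma isRadialSupersolution_mul_rpow {I' : Set ℝ} {S : ℝ → ℝ} (hI' : I' ⊆ I ∩ Ioi 0)
    (hS : ∀ r ∈ I', ∃ x, dist x a = r ∧ u x ≤ S r) :
    IsRadialSupersolution u a I' fun t => φ t * S t ^ (-p) where
  contDiffAt x hx := hu x (hI' hx).1
  pos x hx := hpos x (hI' hx).1
  le_neg_laplacian x hx hmin := by
    obtain ⟨y, hy, hyS⟩ := hS _ hx
    refine le_trans ?_ (hineq x (hI' hx).1)
    have hmono : S (dist x a) ^ (-p) ≤ u x ^ (-p) :=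
      Real.rpow_le_rpow_of_nonpos (hpos x (hI' hx).1) ((hmin hy).trans hyS) (neg_nonpos.2 hp)
    exact mul_le_mul_of_nonneg_left hmono (hφ0 _ (hI' hx).2)

end Nonlinear

variable (hE : Module.finrank ℝ E = n + 2) (hn : n ≠ 0) (hφ0 : ∀ t, 0 < t → 0 ≤ φ t)
  (hφ : ContinuousOn φ (Ioi 0)) (hp : 0 ≤ p) (hρ : 0 < ρ)
include hE hn hφ0 hφ hp hρ

lemma integrableOn_Ioc_of_rpow_le_neg_laplacian
    (hu : ∀ x, dist x a ∈ Ioc 0 ρ → ContDiffAt ℝ 2 u x) (hpos : ∀ x, dist x a ∈ Ioc 0 ρ → 0 < u x)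
    (hineq : ∀ x, dist x a ∈ Ioc 0 ρ → φ (dist x a) * u x ^ (-p) ≤ -Δ u x) :
    IntegrableOn (fun t => t ^ (n + 1) * (φ t * (t ^ n) ^ p)) (Ioc 0 1) := by
  obtain ⟨M, hM, hminimum⟩ :=
    (isRadialSupersolution_zero_of_rpow hφ0 hu hpos hineq Ioc_subset_Ioi_self)
      |>.exists_le_div_pow_and_radialPotential_le hE hn (fun _ _ => le_rfl) continuousOn_const hρ
  set Φ : ℝ → ℝ := fun t => φ t * (M / t ^ n) ^ (-p)
  have hΦ0 (t : ℝ) (ht : 0 < t) : 0 ≤ Φ t := mul_nonneg (hφ0 t ht) (by positivity)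
  have hΦ : ContinuousOn Φ (Ioi 0) := by
    refine hφ.mul (ContinuousOn.rpow_const ?_ fun t ht => Or.inl ?_)
    · exact continuousOn_const.div (continuousOn_id.pow n) fun t ht => pow_ne_zero n (ne_of_gt ht)
    · exact (div_pos hM (pow_pos ht n)).ne'
  have hsuper : IsRadialSupersolution u a (Ioc 0 (ρ / 2)) Φ := by
    refine isRadialSupersolution_mul_rpow hφ0 hp hu hpos hineq (fun r hr => ?_)
      fun r hr => (hminimum r hr).1
    exact ⟨⟨hr.1, by linarith [hr.2]⟩, hr.1⟩
  obtain ⟨M', -, hpotential⟩ :=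
    hsuper.exists_le_div_pow_and_radialPotential_le hE hn hΦ0 hΦ (half_pos hρ)
  have hint : IntegrableOn (fun t => t ^ (n + 1) * Φ t) (Ioc 0 1) := by
    refine integrableOn_Ioc_of_radialPotential_le (M := M') hΦ0 hΦ hn ?_
    filter_upwards [Ioc_mem_nhdsGT (half_pos (half_pos hρ))] with r hr
    rw [mul_comm, ← le_div_iff₀ (pow_pos hr.1 n)]
    exact (hpotential r hr).2
  refine IntegrableOn.congr_fun (hint.const_mul (M ^ p)) (fun t ht => ?_) measurableSet_Ioc
  have htn : 0 < t ^ n := pow_pos ht.1 n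
  have hMp : M ^ p ≠ 0 := (Real.rpow_pos_of_pos hM p).ne'
  simp only [Φ, Real.div_rpow hM.le htn.le, Real.rpow_neg hM.le, Real.rpow_neg htn.le]
  field_simp

lemma integrableOn_Ioi_of_rpow_le_neg_laplacian
    (hu : ∀ x, dist x a ∈ Ici ρ → ContDiffAt ℝ 2 u x) (hpos : ∀ x, dist x a ∈ Ici ρ → 0 < u x)
    (hineq : ∀ x, dist x a ∈ Ici ρ → φ (dist x a) * u x ^ (-p) ≤ -Δ u x) :
    IntegrableOn (fun t => t * φ t) (Ioi 1) := by
  obtain ⟨M, hM, hminimum⟩ :=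
    (isRadialSupersolution_zero_of_rpow hφ0 hu hpos hineq (Ici_subset_Ioi.2 hρ))
      |>.exists_le_const_and_radialPotential_le hE hn (fun _ _ => le_rfl) continuousOn_const hρ
  set Φ : ℝ → ℝ := fun t => φ t * M ^ (-p)
  have hΦ0 (t : ℝ) (ht : 0 < t) : 0 ≤ Φ t := mul_nonneg (hφ0 t ht) (by positivity)
  have hΦ : ContinuousOn Φ (Ioi 0) := hφ.mul continuousOn_const
  have hsuper : IsRadialSupersolution u a (Ici (2 * ρ)) Φ := by
    refine isRadialSupersolution_mul_rpow hφ0 hp hu hpos hineq (fun r hr => ?_)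
      fun r hr => (hminimum r hr).1
    have hr' : 2 * ρ ≤ r := hr
    exact ⟨mem_Ici.2 (by linarith), mem_Ioi.2 (by linarith)⟩
  obtain ⟨M', -, hpotential⟩ :=
    hsuper.exists_le_const_and_radialPotential_le hE hn hΦ0 hΦ (mul_pos two_pos hρ)
  have hint : IntegrableOn (fun t => t * Φ t) (Ioi 1) := by
    refine integrableOn_Ioi_of_radialPotential_le (M := M') hΦ0 hΦ hn ?_
    filter_upwards [eventually_ge_atTop (2 * (2 * ρ))] with r hr using (hpotential r hr).2
  refine IntegrableOn.congr_fun (hint.const_mul (M ^ p)) (fun t _ => ?_) measurableSet_Ioi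
  have hMp : M ^ p ≠ 0 := (Real.rpow_pos_of_pos hM p).ne'
  simp only [Φ, Real.rpow_neg hM.le]
  field_simp

end Necessity

section Sufficiency

variable {n : ℕ} {p : ℝ} {φ : ℝ → ℝ}

lemma continuousOn_mul_one_add_inv_pow_rpow (hφ : ContinuousOn φ (Ioi 0)) (n : ℕ) (p : ℝ) :
    ContinuousOn (fun t => φ t * (1 + 1 / t ^ n) ^ (-p)) (Ioi 0) := by
  refine hφ.mul (ContinuousOn.rpow_const ?_ fun t ht => Or.inl ?_)
  · exact continuousOn_const.add
      (continuousOn_const.div (continuousOn_id.pow n) fun t ht => pow_ne_zero n (ne_of_gt ht))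
  · have := pow_pos (mem_Ioi.1 ht) n
    positivity

lemma one_add_inv_rpow_neg_le_one {s : ℝ} (hs : 0 < s) (hp : 0 ≤ p) :
    (1 + 1 / s) ^ (-p) ≤ 1 :=
  Real.rpow_le_one_of_one_le_of_nonpos (le_add_of_nonneg_right (by positivity)) (neg_nonpos.2 hp)

lemma one_add_inv_rpow_neg_le_rpow {s : ℝ} (hs : 0 < s) (hp : 0 ≤ p) :
    (1 + 1 / s) ^ (-p) ≤ s ^ p := by
  calc (1 + 1 / s) ^ (-p) ≤ (1 / s) ^ (-p) :=
        Real.rpow_le_rpow_of_nonpos (by positivity) (by linarith) (neg_nonpos.2 hp)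
    _ = s ^ p := by rw [one_div, Real.inv_rpow hs.le, Real.rpow_neg hs.le, inv_inv]

variable (hφ0 : ∀ t, 0 < t → 0 ≤ φ t) (hφ : ContinuousOn φ (Ioi 0)) (hp : 0 ≤ p)
  (h0 : IntegrableOn (fun t => t ^ (n + 1) * (φ t * (t ^ n) ^ p)) (Ioc 0 1))
  (h1 : IntegrableOn (fun t => t * φ t) (Ioi 1))
include hφ0 hφ hp h0 h1

lemma exists_one_add_le_radialBarrier :
    ∃ α, ∀ r, 0 < r →
      1 + 1 / r ^ n ≤ radialBarrier n α α (fun t => φ t * (1 + 1 / t ^ n) ^ (-p)) r := by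
  set Φ : ℝ → ℝ := fun t => φ t * (1 + 1 / t ^ n) ^ (-p)
  have hΦ : ContinuousOn Φ (Ioi 0) := continuousOn_mul_one_add_inv_pow_rpow hφ n p
  have hΦ0 (t : ℝ) (ht : 0 < t) : 0 ≤ Φ t := mul_nonneg (hφ0 t ht) (by positivity)
  have h0' : IntegrableOn (fun t => t ^ (n + 1) * Φ t) (Ioc 0 1) := by
    refine h0.mono' ((((continuousOn_id.pow _).mul hΦ).mono
      Ioc_subset_Ioi_self).aestronglyMeasurable measurableSet_Ioc) ?_
    filter_upwards [ae_restrict_mem measurableSet_Ioc] with t ht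
    rw [Real.norm_of_nonneg (mul_nonneg (pow_nonneg ht.1.le _) (hΦ0 t ht.1))]
    exact mul_le_mul_of_nonneg_left (mul_le_mul_of_nonneg_left
      (one_add_inv_rpow_neg_le_rpow (pow_pos ht.1 n) hp) (hφ0 t ht.1)) (pow_nonneg ht.1.le _)
  have h1' : IntegrableOn (fun t => t * Φ t) (Ioi 1) := by
    refine h1.mono' (((continuousOn_id.mul hΦ).mono
      (Ioi_subset_Ioi zero_le_one)).aestronglyMeasurable measurableSet_Ioi) ?_
    filter_upwards [ae_restrict_mem measurableSet_Ioi] with t ht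
    have ht0 : 0 < t := one_pos.trans ht
    rw [Real.norm_of_nonneg (mul_nonneg ht0.le (hΦ0 t ht0))]
    exact mul_le_mul_of_nonneg_left (mul_le_of_le_one_right (hφ0 t ht0)
      (one_add_inv_rpow_neg_le_one (pow_pos ht0 n) hp)) ht0.le
  obtain ⟨C, hC⟩ := exists_radialPotential_le hΦ0 h0' h1'
  refine ⟨C + 1, fun r hr => ?_⟩
  rw [radialBarrier, add_div]
  linarith [hC r hr]

variable {E : Type*} [NormedAddCommGroup E] [InnerProductSpace ℝ E] [FiniteDimensional ℝ E]

theorem exists_solution_of_integrableOn (hE : Module.finrank ℝ E = n + 2) (hn : n ≠ 0)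
    (K : Finset E) (hK : K.Nonempty) :
    ∃ u : E → ℝ, ContDiffOn ℝ 2 u (K : Set E)ᶜ ∧
      ∀ x ∈ (K : Set E)ᶜ, 0 < u x ∧ φ (infDist x K) * u x ^ (-p) ≤ -Δ u x := by
  set Φ : ℝ → ℝ := fun t => φ t * (1 + 1 / t ^ n) ^ (-p)
  have hΦ : ContinuousOn Φ (Ioi 0) := continuousOn_mul_one_add_inv_pow_rpow hφ n p
  have hΦ0 (t : ℝ) (ht : 0 < t) : 0 ≤ Φ t := mul_nonneg (hφ0 t ht) (by positivity)
  obtain ⟨α, hα⟩ := exists_one_add_le_radialBarrier hφ0 hφ hp h0 h1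
  set w := radialBarrier n α α Φ
  have hne {x a : E} (hx : x ∈ (K : Set E)ᶜ) (ha : a ∈ K) : x ≠ a := fun h => hx (h ▸ ha)
  have hw0 {x a : E} (hx : x ∈ (K : Set E)ᶜ) (ha : a ∈ K) : 0 < w (dist x a) := by
    have := dist_pos.2 (hne hx ha)
    exact lt_of_lt_of_le (by positivity) (hα _ this)
  have hC2 {x a : E} (hx : x ∈ (K : Set E)ᶜ) (ha : a ∈ K) :
      ContDiffAt ℝ 2 (fun y => w (dist y a)) x :=
    contDiffAt_radialBarrier_dist hΦ hn (hne hx ha)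
  refine ⟨fun x => ∑ a ∈ K, w (dist x a), fun x hx => ?_, fun x hx => ?_⟩
  · exact (ContDiffAt.sum fun a ha => hC2 hx ha).contDiffWithinAt
  obtain ⟨a, ha, hnearest⟩ := K.finite_toSet.isCompact.exists_infDist_eq_dist hK x
  have hr : 0 < dist x a := dist_pos.2 (hne hx ha)
  have hwu : w (dist x a) ≤ ∑ b ∈ K, w (dist x b) :=
    Finset.single_le_sum (f := fun b => w (dist x b)) (fun b hb => (hw0 hx hb).le) ha
  refine ⟨(hw0 hx ha).trans_le hwu, ?_⟩
  calc φ (infDist x K) * (∑ b ∈ K, w (dist x b)) ^ (-p) ≤ Φ (dist x a) := by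
        rw [hnearest]
        exact mul_le_mul_of_nonneg_left (Real.rpow_le_rpow_of_nonpos (by positivity)
          ((hα _ hr).trans hwu) (neg_nonpos.2 hp)) (hφ0 _ hr)
    _ ≤ ∑ b ∈ K, Φ (dist x b) := Finset.single_le_sum (f := fun b => Φ (dist x b))
        (fun b hb => hΦ0 _ (dist_pos.2 (hne hx hb))) ha
    _ = -Δ (fun y => ∑ b ∈ K, w (dist y b)) x := by
        rw [laplacian_finset_sum fun b hb => hC2 hx hb, ← Finset.sum_neg_distrib]
        refine Finset.sum_congr rfl fun b hb => ?_
        rw [laplacian_radialBarrier_dist hΦ hE hn (hne hx hb), neg_neg]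

end Sufficiency

section FiniteSingularSet

section InfDist

variable {X : Type*} [PseudoMetricSpace X] {K : Set X} {a : X}

lemma exists_pos_infDist_eq_dist (ha : a ∈ K) (hisolated : a ∉ closure (K \ {a})) :
    ∃ ρ > 0, ∀ x, dist x a ≤ ρ → infDist x K = dist x a := by
  obtain ⟨ε, hε, hball⟩ : ∃ ε > 0, ∀ b ∈ K \ {a}, ε ≤ dist a b := by
    simpa [Metric.mem_closure_iff] using hisolated
  refine ⟨ε / 2, half_pos hε, fun x hx => ?_⟩
  refine le_antisymm (infDist_le_dist_of_mem ha) ((le_infDist ⟨a, ha⟩).2 fun b hb => ?_)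
  obtain rfl | hba := eq_or_ne b a
  · exact le_rfl
  · linarith [hball b ⟨hb, hba⟩, dist_triangle_left a b x]

lemma exists_pos_forall_le_infDist (hK : Bornology.IsBounded K) (hne : K.Nonempty) (a : X)
    (r : ℝ) : ∃ ρ > 0, ∀ x, ρ ≤ dist x a → r ≤ infDist x K := by
  obtain ⟨R, hR⟩ := hK.subset_closedBall a
  refine ⟨max 1 (R + r), by positivity, fun x hx => (le_infDist hne).2 fun b hb => ?_⟩
  linarith [(le_max_right 1 (R + r)).trans hx, mem_closedBall.1 (hR hb), dist_triangle x b a]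

end InfDist

variable {E : Type*} [NormedAddCommGroup E] [InnerProductSpace ℝ E] [FiniteDimensional ℝ E]
  {K : Set E} {u : E → ℝ} {φ : ℝ → ℝ} {n : ℕ} {p : ℝ}

section Solution

variable (hE : Module.finrank ℝ E = n + 2) (hn : n ≠ 0) (hKfin : K.Finite) (hKne : K.Nonempty)
  (hp : 0 ≤ p) (hu : ContDiffOn ℝ 2 u Kᶜ)
  (hineq : ∀ x ∈ Kᶜ, 0 < u x ∧ φ (infDist x K) * u x ^ (-p) ≤ -Δ u x)
include hE hn hKfin hKne hp hu hineq

lemma integrableOn_Ioi_of_solution {ψ : ℝ → ℝ} (hψ0 : ∀ t, 0 < t → 0 ≤ ψ t)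
    (hψ : ContinuousOn ψ (Ioi 0)) {r₁ : ℝ} (hr₁ : 0 < r₁)
    (hψφ : ∀ r s, r₁ ≤ r → r ≤ s → ψ s ≤ φ r) : IntegrableOn (fun t => t * ψ t) (Ioi 1) := by
  obtain ⟨a, ha⟩ := hKne
  obtain ⟨ρ, hρ, hdist⟩ := exists_pos_forall_le_infDist hKfin.isBounded ⟨a, ha⟩ a r₁
  have hcompl (x : E) (hx : dist x a ∈ Ici ρ) : x ∈ Kᶜ := fun hxK =>
    (hr₁.trans_le (hdist x hx)).ne' (infDist_zero_of_mem hxK)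
  refine integrableOn_Ioi_of_rpow_le_neg_laplacian hE hn hψ0 hψ hp hρ (u := u) (a := a)
    (fun x hx => hu.contDiffAt (hKfin.isClosed.isOpen_compl.mem_nhds (hcompl x hx)))
    (fun x hx => (hineq x (hcompl x hx)).1) fun x hx => ?_
  obtain ⟨hpos, hle⟩ := hineq x (hcompl x hx)
  refine (mul_le_mul_of_nonneg_right ?_ (Real.rpow_nonneg hpos.le _)).trans hle
  exact hψφ _ _ (hdist x hx) (infDist_le_dist_of_mem ha)

variable (hφ0 : ∀ t, 0 < t → 0 ≤ φ t)
include hφ0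

lemma integrableOn_Ioc_of_solution (hφ : ContinuousOn φ (Ioi 0)) :
    IntegrableOn (fun t => t ^ (n + 1) * (φ t * (t ^ n) ^ p)) (Ioc 0 1) := by
  obtain ⟨a, ha⟩ := hKne
  have hisolated : a ∉ closure (K \ {a}) := by
    rw [(hKfin.subset sdiff_subset).isClosed.closure_eq]
    simp
  obtain ⟨ρ, hρ, hdist⟩ := exists_pos_infDist_eq_dist ha hisolated
  have hcompl (x : E) (hx : dist x a ∈ Ioc 0 ρ) : x ∈ Kᶜ := fun hxK =>
    hx.1.ne' (hdist x hx.2 ▸ infDist_zero_of_mem hxK)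
  refine integrableOn_Ioc_of_rpow_le_neg_laplacian hE hn hφ0 hφ hp hρ (u := u) (a := a)
    (fun x hx => hu.contDiffAt (hKfin.isClosed.isOpen_compl.mem_nhds (hcompl x hx)))
    (fun x hx => (hineq x (hcompl x hx)).1) fun x hx => ?_
  rw [← hdist x hx.2]
  exact (hineq x (hcompl x hx)).2

lemma eq_zero_of_solution_of_monotoneOn {r₁ : ℝ} (hr₁ : 0 < r₁) (hmono : MonotoneOn φ (Ici r₁)) :
    ∀ r ∈ Ici r₁, φ r = 0 := by
  intro r hr
  have hr0 : 0 < r := hr₁.trans_le hr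
  by_contra hne
  have hint : IntegrableOn (fun t => t * φ r) (Ioi 1) :=
    integrableOn_Ioi_of_solution hE hn hKfin hKne hp hu hineq (ψ := fun _ => φ r)
      (fun _ _ => hφ0 r hr0) continuousOn_const hr0
      fun s _ hs _ => hmono hr (le_trans hr hs) hs
  have hid : IntegrableOn (fun t : ℝ => t ^ (1 : ℝ)) (Ioi 1) :=
    IntegrableOn.congr_fun (hint.mul_const (φ r)⁻¹)
      (fun t _ => by simp [hne]) measurableSet_Ioi
  rw [integrableOn_Ioi_rpow_iff one_pos] at hid
  linarith

lemma integrableOn_Ioi_of_solution_of_monotoneOn_or_antitoneOn (hφ : ContinuousOn φ (Ioi 0))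
    (hmono : ∃ r₁, 0 < r₁ ∧ (MonotoneOn φ (Ici r₁) ∨ AntitoneOn φ (Ici r₁))) :
    IntegrableOn (fun t => t * φ t) (Ioi 1) := by
  obtain ⟨r₁, hr₁, hmono⟩ := hmono
  have hanti : AntitoneOn φ (Ici r₁) := hmono.elim
    (fun hmono r hr s hs _ => by
      have hzero := eq_zero_of_solution_of_monotoneOn hE hn hKfin hKne hp hu hineq hφ0 hr₁ hmono
      rw [hzero r hr, hzero s hs])
    id
  exact integrableOn_Ioi_of_solution hE hn hKfin hKne hp hu hineq hφ0 hφ hr₁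
    fun r s hr hrs => hanti hr (hr.trans hrs) hrs

end Solution

lemma integrableOn_Ioo_rpow_iff (n : ℕ) (p : ℝ) (φ : ℝ → ℝ) :
    IntegrableOn (fun r => r ^ ((1 + p) * (((n + 2 : ℕ) : ℝ) - 2) + 1) * φ r) (Ioo 0 1) ↔
      IntegrableOn (fun t => t ^ (n + 1) * (φ t * (t ^ n) ^ p)) (Ioc 0 1) := by
  rw [integrableOn_Ioc_iff_integrableOn_Ioo]
  refine integrableOn_congr_fun (fun t ht => ?_) measurableSet_Ioo
  have hexp : (1 + p) * (((n + 2 : ℕ) : ℝ) - 2) + 1 = (n + 1 : ℕ) + n * p := by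
    push_cast
    ring
  simp only [hexp, Real.rpow_add ht.1, Real.rpow_natCast, Real.rpow_mul ht.1.le]
  ring

theorem statement_11_general (hE : 3 ≤ Module.finrank ℝ E) (hKfin : K.Finite) (hKne : K.Nonempty)
    (hp : 0 ≤ p) (hφ0 : ∀ r, 0 < r → 0 ≤ φ r) (hφ : ContinuousOn φ (Ioi 0))
    (hmono : ∃ r₁, 0 < r₁ ∧ (MonotoneOn φ (Ici r₁) ∨ AntitoneOn φ (Ici r₁))) :
    (∃ u : E → ℝ, ContDiffOn ℝ 2 u Kᶜ ∧
        ∀ x ∈ Kᶜ, 0 < u x ∧ φ (infDist x K) * u x ^ (-p) ≤ -Δ u x) ↔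
      IntegrableOn (fun r => r * φ r) (Ioi 1) ∧
        IntegrableOn (fun r => r ^ ((1 + p) * ((Module.finrank ℝ E : ℝ) - 2) + 1) * φ r)
          (Ioo 0 1) := by
  obtain ⟨n, hn⟩ := Nat.exists_eq_add_of_le' (Nat.le_of_succ_le hE)
  have hn0 : n ≠ 0 := by lia
  rw [hn, integrableOn_Ioo_rpow_iff]
  constructor
  · rintro ⟨u, hu, hineq⟩
    exact ⟨integrableOn_Ioi_of_solution_of_monotoneOn_or_antitoneOn hn hn0 hKfin hKne hp hu
      hineq hφ0 hφ hmono, integrableOn_Ioc_of_solution hn hn0 hKfin hKne hp hu hineq hφ0 hφ⟩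
  · rintro ⟨h1, h0⟩
    obtain ⟨K, rfl⟩ := hKfin.exists_finset_coe
    exact exists_solution_of_integrableOn hφ0 hφ hp h0 h1 hn hn0 K hKne

end FiniteSingularSet

lemma continuousOn_of_forall_isCompact_holderOnWith {X Y : Type*} [PseudoEMetricSpace X]
    [LocallyCompactSpace X] [PseudoEMetricSpace Y] {f : X → Y} {U : Set X} {γ : NNReal}
    (hU : IsOpen U) (hγ : 0 < γ)
    (hf : ∀ s, IsCompact s → s ⊆ U → ∃ C, HolderOnWith C γ f s) : ContinuousOn f U := by
  refine fun x hx => ContinuousAt.continuousWithinAt ?_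
  obtain ⟨s, hs, hxs, hsU⟩ := exists_compact_subset hU hx
  obtain ⟨C, hC⟩ := hf s hs hsU
  exact (hC.continuousOn hγ).continuousAt (mem_interior_iff_mem_nhds.1 hxs)

end

/-- Theorem 4.1 (existence part): for a finite set `K` of points, the inequality
`-Δu ≥ φ(dist(x,K)) u^{-p}` has a `C²` positive solution iff
`∫₁^∞ r φ(r) dr < ∞` and `∫₀¹ r^{(1+p)(N-2)+1} φ(r) dr < ∞`. -/
theorem statement_11 {N : ℕ} (hN : 3 ≤ N) (K : Set (EuclideanSpace ℝ (Fin N)))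
    (hKfin : K.Finite) (hKne : K.Nonempty) (p : ℝ) (hp : 0 < p)
    (γ : NNReal) (hγ0 : 0 < γ) (hγ1 : γ < 1) (φ : ℝ → ℝ)
    (hφpos : ∀ r : ℝ, 0 < r → 0 < φ r)
    (hφhold : ∀ s : Set ℝ, IsCompact s → s ⊆ Ioi (0:ℝ) → ∃ C : NNReal, HolderOnWith C γ φ s)
    (hmono : ∃ r₁ : ℝ, 0 < r₁ ∧ (MonotoneOn φ (Ici r₁) ∨ AntitoneOn φ (Ici r₁))) :
    (∃ u : EuclideanSpace ℝ (Fin N) → ℝ,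
        ContDiffOn ℝ 2 u Kᶜ ∧
        ∀ x ∈ Kᶜ, 0 < u x ∧ φ (infDist x K) * u x ^ (-p) ≤ -laplacian u x) ↔
      (IntegrableOn (fun r : ℝ => r * φ r) (Ioi (1:ℝ)) volume ∧
        IntegrableOn (fun r : ℝ => r ^ ((1 + p) * ((N:ℝ) - 2) + 1) * φ r)
          (Ioo (0:ℝ) 1) volume) := by
  have hφ : ContinuousOn φ (Ioi 0) :=
    continuousOn_of_forall_isCompact_holderOnWith isOpen_Ioi hγ0 hφhold
  have hE : 3 ≤ Module.finrank ℝ (EuclideanSpace ℝ (Fin N)) := by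
    rwa [finrank_euclideanSpace_fin]
  simpa only [laplacian_eq_innerProductSpace_laplacian, finrank_euclideanSpace_fin] using
    statement_11_general hE hKfin hKne hp.le
      (fun r hr => (hφpos r hr).le) hφ hmono
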